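/- Let n ≥ 2 and let x_0 < x_1 < ... < x_n be real numbers, and suppose there exist constants C ≥ 1 and R ≥ 1 such that: (1) for all 0 ≤ j ≤ k ≤ n-1, (x_{k+1} - x_k)/(x_{k+1} - x_j) ≤ C/(k+1-j); (2) for all 0 ≤ k ≤ n-1 and k+1 ≤ j ≤ n, (x_{k+1} - x_k)/(x_j - x_k) ≤ C/(j-k); (3) for all 1 ≤ k ≤ n-1, 1/R ≤ (x_{k+1} - x_k)/(x_k - x_{k-1}) ≤ R. Then for every x ∈ [x_0, x_n] with x ≠ x_i for all i, Σ_{i=0}^n 1/|x - x_i| ≤ (R+1)(1 + 2C·ln n) · |Σ_{j=0}^n (-1)^j/(x - x_j)|. -/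

import Mathlib

open Finset Real

/-! A point `z` in a cell `(x k, x (k + 1))` splits the nodes into those on its left and those on
its right. Read off outwards from `z`, both alternating sums of reciprocal distances are
nonnegative and, since the sign of `z - x j` changes across `z`, they add up without cancellation
to the denominator of the Lebesgue function, up to sign. Hence it suffices to bound the sum of
reciprocal distances by the alternating one on each side separately. Relative to the reciprocal of
the smallest distance, conditions (1) and (2) bound the former by a harmonic sum, while (3) keeps
the latter at least `1 / (R + 1)`, because its first two terms cannot cancel. Comparing the two
sums on each side before adding is what saves the factor `2` of the stated bound. -/

section AlternatingSum

variable {α : Type*} [Ring α] {u : ℕ → α} {m : ℕ}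

lemma alternating_sum_range_add_two (u : ℕ → α) (m : ℕ) :
    ∑ i ∈ range (m + 2), (-1) ^ i * u i =
      (u 0 - u 1) + ∑ i ∈ range m, (-1) ^ i * u (i + 2) := by
  rw [add_comm m, sum_range_add]
  simp [sum_range_succ, pow_add, add_comm 2, sub_eq_add_neg]

variable [PartialOrder α] [IsOrderedAddMonoid α]

lemma alternating_sum_nonneg (hanti : AntitoneOn u (Set.Iio m)) (hpos : ∀ i < m, 0 ≤ u i) :
    0 ≤ ∑ i ∈ range m, (-1) ^ i * u i := by
  induction m using Nat.twoStepInduction generalizing u with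
  | zero => simp
  | one => simpa using hpos 0
  | more m ih _ =>
    rw [alternating_sum_range_add_two]
    refine add_nonneg (sub_nonneg.2 <| hanti (by simp) (by simp) zero_le_one) (ih ?_ ?_)
    · exact fun i hi j hj hij => hanti (by simpa using hi) (by simpa using hj) (by lia)
    · exact fun i hi => hpos _ (by lia)

lemma sub_le_alternating_sum (hanti : AntitoneOn u (Set.Iio (m + 2)))
    (hpos : ∀ i < m + 2, 0 ≤ u i) :
    u 0 - u 1 ≤ ∑ i ∈ range (m + 2), (-1) ^ i * u i := by
  rw [alternating_sum_range_add_two]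
  refine le_add_of_nonneg_right (alternating_sum_nonneg ?_ fun i hi => hpos _ (by lia))
  exact fun i hi j hj hij => hanti (by simpa using hi) (by simpa using hj) (by lia)

end AlternatingSum

section OneSided

variable {d : ℕ → ℝ} {m n : ℕ} {C R : ℝ}

lemma one_div_le_mul_alternating_sum_one_div (hd0 : 0 < d 0) (hd : MonotoneOn d (Set.Iic m))
    (hR : 0 ≤ R) (hgap : 1 ≤ m → d 0 ≤ R * (d 1 - d 0)) :
    1 / (R + 1) ≤ d 0 * ∑ i ∈ range (m + 1), (-1) ^ i * (1 / d i) := by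
  have hpos : ∀ i ≤ m, 0 < d i := fun i hi => hd0.trans_le (hd (by simp) hi i.zero_le)
  rcases m with _ | m
  · have : 1 / (R + 1) ≤ 1 := (div_le_one (by positivity)).2 (by linarith)
    simpa [hd0.ne'] using this
  have hd1 : 0 < d 1 := hpos 1 (by lia)
  have hgap1 : d 0 ≤ R * (d 1 - d 0) := hgap (by lia)
  have hanti : AntitoneOn (fun i => 1 / d i) (Set.Iio (m + 2)) := fun i hi j hj hij =>
    one_div_le_one_div_of_le (hpos i (Nat.le_of_lt_succ hi))
      (hd (Nat.le_of_lt_succ hi) (Nat.le_of_lt_succ hj) hij)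
  calc
    1 / (R + 1) ≤ (d 1 - d 0) / d 1 := by
      rw [div_le_div_iff₀ (by positivity) hd1]
      linarith
    _ = d 0 * (1 / d 0 - 1 / d 1) := by field_simp
    _ ≤ d 0 * ∑ i ∈ range (m + 2), (-1) ^ i * (1 / d i) := by
      gcongr
      exact sub_le_alternating_sum hanti fun i hi =>
        (one_div_pos.2 (hpos i (Nat.le_of_lt_succ hi))).le

lemma sum_range_one_div_add_two_le_log (m : ℕ) :
    ∑ i ∈ range m, 1 / ((i : ℝ) + 2) ≤ log (m + 1) := by
  calc
    ∑ i ∈ range m, 1 / ((i : ℝ) + 2) = harmonic (m + 1) - 1 := by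
      simp [harmonic, sum_range_succ', add_assoc, one_add_one_eq_two]
    _ ≤ log (m + 1) := by
      have h := harmonic_le_one_add_log (m + 1)
      push_cast at h
      linarith

lemma mul_sum_one_div_le_one_add_log (hd0 : d 0 ≠ 0) (hmn : m < n)
    (hratio : ∀ i ≤ m, d 0 / d i ≤ C / (i + 1)) :
    d 0 * ∑ i ∈ range (m + 1), 1 / d i ≤ 1 + C * log n := by
  have hC : 0 ≤ C := zero_le_one.trans (by simpa [hd0] using hratio 0 m.zero_le)
  calc
    d 0 * ∑ i ∈ range (m + 1), 1 / d i = 1 + ∑ i ∈ range m, d 0 / d (i + 1) := by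
      rw [mul_sum, sum_range_succ', add_comm]
      simp [hd0, div_eq_mul_inv]
    _ ≤ 1 + ∑ i ∈ range m, C * (1 / ((i : ℝ) + 2)) := by
      gcongr with i hi
      have h := hratio (i + 1) (mem_range.1 hi)
      push_cast at h
      rwa [add_assoc, one_add_one_eq_two, div_eq_mul_one_div C] at h
    _ ≤ 1 + C * log (m + 1) := by
      rw [← mul_sum]
      gcongr
      exact sum_range_one_div_add_two_le_log m
    _ ≤ 1 + C * log n := by
      gcongr
      exact_mod_cast hmn

lemma sum_one_div_le_mul_alternating_sum_one_div (hd0 : 0 < d 0) (hd : MonotoneOn d (Set.Iic m))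
    (hmn : m < n) (hR : 0 ≤ R) (hratio : ∀ i ≤ m, d 0 / d i ≤ C / (i + 1))
    (hgap : 1 ≤ m → d 0 ≤ R * (d 1 - d 0)) :
    ∑ i ∈ range (m + 1), 1 / d i ≤
      (R + 1) * (1 + C * log n) * ∑ i ∈ range (m + 1), (-1) ^ i * (1 / d i) := by
  have hC : 0 ≤ C := zero_le_one.trans (by simpa [hd0.ne'] using hratio 0 m.zero_le)
  have hlower := one_div_le_mul_alternating_sum_one_div hd0 hd hR hgap
  rw [div_le_iff₀' (by positivity)] at hlower
  refine le_of_mul_le_mul_left ?_ hd0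
  calc
    d 0 * ∑ i ∈ range (m + 1), 1 / d i ≤ (1 + C * log n) * 1 := by
      rw [mul_one]
      exact mul_sum_one_div_le_one_add_log hd0.ne' hmn hratio
    _ ≤ (1 + C * log n) * ((R + 1) * (d 0 * ∑ i ∈ range (m + 1), (-1) ^ i * (1 / d i))) := by
      have : 0 ≤ log n := log_natCast_nonneg n
      gcongr
    _ = d 0 * ((R + 1) * (1 + C * log n) * ∑ i ∈ range (m + 1), (-1) ^ i * (1 / d i)) := by ring

end OneSided

lemma sum_range_eq_sum_sub_add_sum_add {M : Type*} [AddCommMonoid M] (f : ℕ → M) (k p : ℕ) :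
    ∑ i ∈ range (k + 1 + p + 1), f i =
      ∑ i ∈ range (k + 1), f (k - i) + ∑ i ∈ range (p + 1), f (k + 1 + i) := by
  rw [add_assoc (k + 1), sum_range_add, sum_flip]

lemma sum_one_div_abs_sub_eq {K : Type*} [Field K] [LinearOrder K] [IsStrictOrderedRing K]
    {x : ℕ → K} {k p : ℕ} {z : K}
    (hx : MonotoneOn x (Set.Iic (k + 1 + p))) (hz : z ∈ Set.Ioo (x k) (x (k + 1))) :
    ∑ i ∈ range (k + 1 + p + 1), 1 / |z - x i| =
      ∑ i ∈ range (k + 1), 1 / (z - x (k - i)) +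
        ∑ i ∈ range (p + 1), 1 / (x (k + 1 + i) - z) := by
  rw [sum_range_eq_sum_sub_add_sum_add]
  congr 1 <;> refine sum_congr rfl fun i hi => ?_ <;> rw [mem_range] at hi
  · have : x (k - i) ≤ x k := hx (Set.mem_Iic.2 (by lia)) (Set.mem_Iic.2 (by lia)) (by lia)
    rw [abs_of_pos (by linarith [hz.1])]
  · have : x (k + 1) ≤ x (k + 1 + i) := hx (by simp) (Set.mem_Iic.2 (by lia)) (by lia)
    rw [abs_sub_comm, abs_of_pos (by linarith [hz.2])]

lemma alternating_sum_one_div_sub_eq {K : Type*} [Field K] (x : ℕ → K) (z : K) (k p : ℕ) :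
    ∑ j ∈ range (k + 1 + p + 1), (-1) ^ j / (z - x j) =
      (-1) ^ k * (∑ i ∈ range (k + 1), (-1) ^ i * (1 / (z - x (k - i))) +
        ∑ i ∈ range (p + 1), (-1) ^ i * (1 / (x (k + 1 + i) - z))) := by
  rw [sum_range_eq_sum_sub_add_sum_add, mul_add, mul_sum, mul_sum]
  congr 1 <;> refine sum_congr rfl fun i hi => ?_
  · obtain ⟨j, rfl⟩ := Nat.exists_eq_add_of_le (Nat.le_of_lt_succ (mem_range.1 hi))
    rw [Nat.add_sub_cancel_left, ← mul_assoc, ← pow_add, add_right_comm, pow_add _ (i + i),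
      Even.neg_one_pow ⟨i, rfl⟩, one_mul, mul_one_div]
  · rw [← neg_sub (x _) z, div_neg]
    ring

lemma exists_mem_Ioo_of_ne {α : Type*} [LinearOrder α] {x : ℕ → α} {n : ℕ} {z : α}
    (hz : z ∈ Set.Icc (x 0) (x n)) (hne : ∀ i ≤ n, z ≠ x i) :
    ∃ k < n, z ∈ Set.Ioo (x k) (x (k + 1)) := by
  have hz' : z ∈ Set.Ioc (x 0) (x n) := ⟨hz.1.lt_of_ne' (hne 0 n.zero_le), hz.2⟩
  obtain ⟨k, hk, hzk⟩ := Set.mem_iUnion₂.1 (Ioc_subset_biUnion_Ioc n x hz')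
  rw [mem_range] at hk
  exact ⟨k, hk, hzk.1, hzk.2.lt_of_ne (hne _ hk)⟩

lemma div_le_add_div_add {K : Type*} [Field K] [LinearOrder K] [IsStrictOrderedRing K]
    {a b c : K} (ha : 0 ≤ a) (hb : 0 < b) (hbc : b ≤ c) :
    b / c ≤ (b + a) / (c + a) := by
  rw [div_le_div_iff₀ (by linarith) (by linarith)]
  linarith [mul_le_mul_of_nonneg_left hbc ha]

/-- Nodes `x 0 < ⋯ < x n` that are well-spaced with constants `C` and `R`. The three fields
after monotonicity are conditions (1), (2) and (3). -/
structure WellSpaced (x : ℕ → ℝ) (n : ℕ) (C R : ℝ) : Prop where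
  strictMonoOn : StrictMonoOn x (Set.Iic n)
  gap_div_left_le : ∀ j k : ℕ, j ≤ k → k + 1 ≤ n →
    (x (k + 1) - x k) / (x (k + 1) - x j) ≤ C / ((k : ℝ) + 1 - j)
  gap_div_right_le : ∀ k j : ℕ, k + 1 ≤ j → j ≤ n →
    (x (k + 1) - x k) / (x j - x k) ≤ C / ((j : ℝ) - k)
  gap_ratio_mem : ∀ k : ℕ, 1 ≤ k → k + 1 ≤ n →
    1 / R ≤ (x (k + 1) - x k) / (x k - x (k - 1)) ∧
      (x (k + 1) - x k) / (x k - x (k - 1)) ≤ R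

namespace WellSpaced

variable {x : ℕ → ℝ} {n k p : ℕ} {C R z : ℝ}

lemma sum_one_div_left_le (hx : WellSpaced x n C R) (hR : 0 < R) (hk : k < n)
    (hz : z ∈ Set.Ioo (x k) (x (k + 1))) :
    ∑ i ∈ range (k + 1), 1 / (z - x (k - i)) ≤
      (R + 1) * (1 + C * log n) * ∑ i ∈ range (k + 1), (-1) ^ i * (1 / (z - x (k - i))) := by
  have hmono : MonotoneOn (fun i => z - x (k - i)) (Set.Iic k) := fun i _ j _ hij =>
    sub_le_sub_left (hx.strictMonoOn.monotoneOn (Set.mem_Iic.2 (by lia)) (Set.mem_Iic.2 (by lia))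
      (by lia)) z
  have hz0 : 0 < z - x k := sub_pos.2 hz.1
  refine sum_one_div_le_mul_alternating_sum_one_div (d := fun i => z - x (k - i)) hz0 hmono hk
    hR.le (fun i hi => ?_) fun hk1 => ?_
  · calc
      (z - x k) / (z - x (k - i))
        ≤ (z - x k + (x (k + 1) - z)) / (z - x (k - i) + (x (k + 1) - z)) :=
          div_le_add_div_add (sub_pos.2 hz.2).le hz0 (hmono k.zero_le hi i.zero_le)
      _ = (x (k + 1) - x k) / (x (k + 1) - x (k - i)) := by congr 1 <;> ring
      _ ≤ C / (i + 1) := by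
          convert hx.gap_div_left_le (k - i) k (k.sub_le i) hk using 2
          push_cast [hi]
          ring
  · have hgap : 0 < x k - x (k - 1) :=
      sub_pos.2 (hx.strictMonoOn (Set.mem_Iic.2 (by lia)) (Set.mem_Iic.2 (by lia)) (by lia))
    have hle : x (k + 1) - x k ≤ R * (x k - x (k - 1)) :=
      (div_le_iff₀ hgap).1 (hx.gap_ratio_mem k hk1 hk).2
    simp only [Nat.sub_zero, sub_sub_sub_cancel_left]
    linarith [hz.2]

lemma sum_one_div_right_le (hx : WellSpaced x (k + 1 + p) C R) (hR : 0 < R)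
    (hz : z ∈ Set.Ioo (x k) (x (k + 1))) :
    ∑ i ∈ range (p + 1), 1 / (x (k + 1 + i) - z) ≤
      (R + 1) * (1 + C * log (k + 1 + p : ℕ)) *
        ∑ i ∈ range (p + 1), (-1) ^ i * (1 / (x (k + 1 + i) - z)) := by
  have hmono : MonotoneOn (fun i => x (k + 1 + i) - z) (Set.Iic p) := fun i hi j hj hij =>
    sub_le_sub_right (hx.strictMonoOn.monotoneOn (by simpa using hi) (by simpa using hj)
      (by lia)) z
  have hz0 : 0 < x (k + 1) - z := sub_pos.2 hz.2
  refine sum_one_div_le_mul_alternating_sum_one_div (d := fun i => x (k + 1 + i) - z) hz0 hmono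
    (by lia) hR.le (fun i hi => ?_) fun hp => ?_
  · calc
      (x (k + 1) - z) / (x (k + 1 + i) - z)
        ≤ (x (k + 1) - z + (z - x k)) / (x (k + 1 + i) - z + (z - x k)) :=
          div_le_add_div_add (sub_pos.2 hz.1).le hz0 (hmono p.zero_le hi i.zero_le)
      _ = (x (k + 1) - x k) / (x (k + 1 + i) - x k) := by congr 1 <;> ring
      _ ≤ C / (i + 1) := by
          convert hx.gap_div_right_le k (k + 1 + i) (by lia) (by lia) using 2
          push_cast
          ring
  · have hgap : 0 < x (k + 1) - x k :=
      sub_pos.2 (hx.strictMonoOn (Set.mem_Iic.2 (by lia)) (by simp) (by lia))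
    have hle : x (k + 1) - x k ≤ R * (x (k + 1 + 1) - x (k + 1)) := by
      have h := (hx.gap_ratio_mem (k + 1) (by lia) (by lia)).1
      rwa [Nat.add_sub_cancel, div_le_div_iff₀ hR hgap, one_mul, mul_comm] at h
    simp only [add_zero, sub_sub_sub_cancel_right]
    linarith [hz.1]

end WellSpaced

theorem berrut_lebesgue_bound_well_spaced_general {x : ℕ → ℝ} {n : ℕ} {C R z : ℝ}
    (hx : WellSpaced x n C R) (hR : 0 < R) (hz : z ∈ Set.Icc (x 0) (x n))
    (hne : ∀ i ≤ n, z ≠ x i) :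
    ∑ i ∈ range (n + 1), 1 / |z - x i| ≤
      (R + 1) * (1 + C * log n) * |∑ j ∈ range (n + 1), (-1) ^ j / (z - x j)| := by
  obtain ⟨k, hk, hzk⟩ := exists_mem_Ioo_of_ne hz hne
  have hC : 0 ≤ C := by
    have hgap : x (k + 1) - x k ≠ 0 := (sub_pos.2 (hzk.1.trans hzk.2)).ne'
    exact zero_le_one.trans (by simpa [hgap] using hx.gap_div_right_le k (k + 1) le_rfl hk)
  have hlog : 0 ≤ log n := log_natCast_nonneg n
  obtain ⟨p, rfl⟩ := Nat.exists_eq_add_of_le (Nat.succ_le_of_lt hk)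
  rw [sum_one_div_abs_sub_eq hx.strictMonoOn.monotoneOn hzk, alternating_sum_one_div_sub_eq,
    abs_mul, abs_neg_one_pow, one_mul]
  refine (add_le_add (hx.sum_one_div_left_le hR hk hzk) (hx.sum_one_div_right_le hR hzk)).trans ?_
  rw [← mul_add]
  gcongr
  exact le_abs_self _

/-- For a family of well-spaced points with constants `C, R ≥ 1`, the Lebesgue function
of Berrut's rational interpolant is bounded by `(R+1)(1 + 2C ln n)`. -/
theorem berrut_lebesgue_bound_well_spaced
    (n : ℕ) (hn : 2 ≤ n) (x : ℕ → ℝ)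
    (hmono : ∀ i, i < n → x i < x (i + 1))
    (C R : ℝ) (hC : 1 ≤ C) (hR : 1 ≤ R)
    (h1 : ∀ j k : ℕ, j ≤ k → k + 1 ≤ n →
      (x (k + 1) - x k) / (x (k + 1) - x j) ≤ C / ((k : ℝ) + 1 - j))
    (h2 : ∀ k j : ℕ, k + 1 ≤ j → j ≤ n →
      (x (k + 1) - x k) / (x j - x k) ≤ C / ((j : ℝ) - k))
    (h3 : ∀ k : ℕ, 1 ≤ k → k + 1 ≤ n →
      1 / R ≤ (x (k + 1) - x k) / (x k - x (k - 1)) ∧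
      (x (k + 1) - x k) / (x k - x (k - 1)) ≤ R) :
    ∀ z ∈ Set.Icc (x 0) (x n), (∀ i ≤ n, z ≠ x i) →
      (∑ i ∈ Finset.range (n + 1), 1 / |z - x i|) ≤
        (R + 1) * (1 + 2 * C * Real.log n) *
          |∑ j ∈ Finset.range (n + 1), (-1 : ℝ) ^ j / (z - x j)| := by
  intro z hz hne
  have hx : WellSpaced x n C R := ⟨strictMonoOn_Iic_of_lt_succ hmono, h1, h2, h3⟩
  refine (berrut_lebesgue_bound_well_spaced_general hx (by linarith) hz hne).trans ?_
  gcongr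
  linarith
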